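/- arXiv:1805.06134 — 4 statements merged into one kernel-verified Lean document; each statement's English description precedes it below -/
import Mathlib

section
/- Let R be a commutative ring, let u, c ∈ R, and let d : ℕ → R satisfy d(0) = 1 and the recurrence d(δ+1) = d(1)·d(δ) − u·d(δ−1) for all δ ≥ 1. Define D(0) = 1 and D(δ) = d(δ) − c·d(δ−1) for δ ≥ 1. Then for all integers δ, γ ≥ 0, with m = min(δ,γ): D(δ)·D(γ) = Σ_{i=0}^{m} u^i · D(δ+γ−2i) − c·Σ_{i=0}^{m−1} u^i · D(δ+γ−1−2i). -/
/-!
With `d (-1) = 0`, the sequence `d` is the shifted Lucas sequence `U (n + 1)` with parameters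
`P = d 1` and `Q = u`, and `D n = U (n + 1) - c * U n` for all `n`, including `n = 0`. Any solution
`x` of the recurrence `x (n + 2) = P x (n + 1) - Q x n`, in particular `D`, satisfies the addition
formula `x (m + n + 1) = U (n + 1) x (m + 1) - Q U n x m`. Solving it for `U (n + 1) x (m + 1)` and
iterating expands `U n x m`, for `n ≤ m + 1`, as a sum; by symmetry one may take `γ ≤ δ`, and the
two sums are then the expansions of `U (γ + 1) D δ` and `U γ D δ`.
-/

section Lucas

variable {R M : Type*} [CommRing R] [AddCommGroup M] [Module R M] {P Q : R} {x : ℕ → M}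

/-- The Lucas sequence of the first kind `U_n(P, Q)`. -/
def lucasU (P Q : R) : ℕ → R
  | 0 => 0
  | 1 => 1
  | n + 2 => P * lucasU P Q (n + 1) - Q * lucasU P Q n

/-- The sequence `x` solves the Lucas recurrence with parameters `P` and `Q`; the initial values
are arbitrary, and may lie in a module over the ring of parameters. -/
def IsLucasSeq (P Q : R) (x : ℕ → M) : Prop :=
  ∀ n, x (n + 2) = P • x (n + 1) - Q • x n

theorem isLucasSeq_lucasU (P Q : R) : IsLucasSeq P Q (lucasU P Q) :=
  fun _ => rfl

namespace IsLucasSeq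

theorem succ_sub_smul (hx : IsLucasSeq P Q x) (c : R) :
    IsLucasSeq P Q fun n => x (n + 1) - c • x n := by
  intro n
  simp only [hx (n + 1), hx n]
  module

theorem apply_add_add_one (hx : IsLucasSeq P Q x) (m n : ℕ) :
    x (m + n + 1) = lucasU P Q (n + 1) • x (m + 1) - (Q * lucasU P Q n) • x m := by
  induction n generalizing m with
  | zero => simp [lucasU]
  | succ n ih =>
    rw [← Nat.add_assoc, Nat.add_right_comm m n 1, ih (m + 1), hx m, lucasU]
    module

theorem eq_lucasU_succ {d : ℕ → R} (hd : IsLucasSeq (d 1) Q d) (h0 : d 0 = 1) (n : ℕ) :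
    d n = lucasU (d 1) Q (n + 1) := by
  cases n with
  | zero => exact h0
  | succ n =>
    have h := hd.apply_add_add_one 0 n
    simp only [zero_add, smul_eq_mul, h0, mul_one] at h
    rw [h, lucasU, mul_comm]

theorem lucasU_smul_eq_sum (hx : IsLucasSeq P Q x) {m n : ℕ} (hn : n ≤ m + 1) :
    lucasU P Q n • x m = ∑ i ∈ Finset.range n, Q ^ i • x (m + n - 1 - 2 * i) := by
  induction n generalizing m with
  | zero => simp [lucasU]
  | succ n ih =>
    cases m with
    | zero =>
      obtain rfl : n = 0 := by omega
      simp [lucasU]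
    | succ m =>
      have head_index : m + 1 + (n + 1) - 1 - 2 * 0 = m + n + 1 := by omega
      have tail_index (i : ℕ) : m + 1 + (n + 1) - 1 - 2 * (i + 1) = m + n - 1 - 2 * i := by omega
      calc lucasU P Q (n + 1) • x (m + 1)
          = Q • lucasU P Q n • x m + x (m + n + 1) := by
            rw [hx.apply_add_add_one]
            module
        _ = Q • ∑ i ∈ Finset.range n, Q ^ i • x (m + n - 1 - 2 * i) + x (m + n + 1) := by
            rw [ih (by omega)]
        _ = ∑ i ∈ Finset.range (n + 1), Q ^ i • x (m + 1 + (n + 1) - 1 - 2 * i) := by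
            rw [Finset.sum_range_succ', head_index, pow_zero, one_smul]
            simp only [Finset.smul_sum, smul_smul, ← pow_succ', tail_index]

theorem lucasU_succ_sub_mul_smul_eq_sum (hx : IsLucasSeq P Q x) (c : R) {m n : ℕ} (hn : n ≤ m) :
    (lucasU P Q (n + 1) - c * lucasU P Q n) • x m =
      ∑ i ∈ Finset.range (n + 1), Q ^ i • x (m + n - 2 * i)
        - c • ∑ i ∈ Finset.range n, Q ^ i • x (m + n - 1 - 2 * i) := by
  rw [sub_smul, mul_smul, hx.lucasU_smul_eq_sum (Nat.add_le_add_right hn 1),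
    hx.lucasU_smul_eq_sum (Nat.le_succ_of_le hn), ← Nat.add_assoc, Nat.add_sub_cancel]

end IsLucasSeq

end Lucas

/-- With `d` as in Statement 0 and `D δ = d δ - c * d (δ-1)` (`D 0 = 1`),
one has, with `m = min δ γ`,
`D δ * D γ = ∑_{i=0}^{m} u^i * D (δ+γ-2i) - c * ∑_{i=0}^{m-1} u^i * D (δ+γ-1-2i)`. -/
theorem statement2 {R : Type*} [CommRing R] (u c : R) (d D : ℕ → R)
    (h0 : d 0 = 1)
    (hrec : ∀ δ : ℕ, 1 ≤ δ → d (δ + 1) = d 1 * d δ - u * d (δ - 1))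
    (hD0 : D 0 = 1)
    (hD : ∀ δ : ℕ, 1 ≤ δ → D δ = d δ - c * d (δ - 1)) :
    ∀ δ γ : ℕ, D δ * D γ =
      ∑ i ∈ Finset.range (min δ γ + 1), u ^ i * D (δ + γ - 2 * i)
        - c * ∑ i ∈ Finset.range (min δ γ), u ^ i * D (δ + γ - 1 - 2 * i) := by
  have d_isLucasSeq : IsLucasSeq (d 1) u d := fun n => hrec (n + 1) n.succ_pos
  have d_eq := d_isLucasSeq.eq_lucasU_succ h0
  have D_eq : ∀ n, D n = lucasU (d 1) u (n + 1) - c * lucasU (d 1) u n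
    | 0 => by simp [hD0, lucasU]
    | n + 1 => by rw [hD (n + 1) n.succ_pos, d_eq (n + 1), Nat.add_sub_cancel, d_eq n]
  have D_isLucasSeq : IsLucasSeq (d 1) u D := by
    rw [funext D_eq]
    exact (isLucasSeq_lucasU (d 1) u).succ_sub_smul c
  intro δ γ
  wlog hγδ : γ ≤ δ generalizing δ γ
  · rw [mul_comm, min_comm, add_comm δ]
    exact this γ δ (le_of_not_ge hγδ)
  rw [min_eq_right hγδ, mul_comm, D_eq γ]
  exact D_isLucasSeq.lucasU_succ_sub_mul_smul_eq_sum c hγδ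
end

section
/- Let R be a commutative ring. Let V, W : ℤ_{>0} → R be completely multiplicative (f(1) = 1 and f(ab) = f(a)f(b) for all a, b), let E : ℤ_{>0} → R be multiplicative (E(1) = 1 and E(ab) = E(a)E(b) whenever gcd(a,b) = 1) with E(p^{δ+1}) = E(p)E(p^δ) − V(p)E(p^{δ−1}) for every prime p and every δ ≥ 1, and let F : ℤ_{>0} → R be the multiplicative function with F(p^δ) = E(p^δ) − W(p)·E(p^{δ−1}) for every prime p and δ ≥ 1. Then for all positive integers N, M: F(N)·F(M) = Σ_{d | gcd(N,M)} Σ_{d₁ | gcd(N,M)/d} μ(d₁)·V(d)·W(d₁)·F(NM/(d²d₁)), where μ is the Möbius function. -/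
/-!
Both sides are multiplicative functions of the pair `(N, M)`, so it suffices to compare them at
`(p ^ a, p ^ b)`; by symmetry `b ≤ a`. Put `v = V p` and `w = W p`. There `e n = E (p ^ n)`
satisfies the Chebyshev-type recurrence `e (n + 2) = e 1 * e (n + 1) - v * e n`, and
`f n = F (p ^ n)` satisfies it too. The addition formula for such sequences gives the
Clebsch–Gordan expansion `f (b + c) * e b = ∑ v ^ i * f (c + 2 * j)` over `i + j = b`, and for
`b ≥ 1` subtracting `w` times the same expansion with `b - 1` and `c + 1` yields
`f (b + c) * f b`. On the other side `μ` vanishes at `p ^ k` for `2 ≤ k`, which leaves exactly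
these two groups of terms.
-/

open Finset ArithmeticFunction

section LinearRecurrence

variable {R : Type*} [CommRing R] {v w : R} {e f : ℕ → R}

theorem apply_add_add_two_of_recurrence (he0 : e 0 = 1)
    (he : ∀ n, e (n + 2) = e 1 * e (n + 1) - v * e n)
    (hf : ∀ n, f (n + 2) = e 1 * f (n + 1) - v * f n) (m n : ℕ) :
    f (m + n + 2) = e (n + 1) * f (m + 1) - v * e n * f m := by
  induction n generalizing m with
  | zero => simp [hf, he0]
  | succ n ih =>
    rw [← Nat.add_assoc, Nat.add_right_comm m n 1, ih, he, hf]
    ring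

theorem apply_add_mul_eq_sum_antidiagonal_of_recurrence (he0 : e 0 = 1)
    (he : ∀ n, e (n + 2) = e 1 * e (n + 1) - v * e n)
    (hf : ∀ n, f (n + 2) = e 1 * f (n + 1) - v * f n) (b c : ℕ) :
    f (b + c) * e b = ∑ x ∈ antidiagonal b, v ^ x.1 * f (c + 2 * x.2) := by
  induction b with
  | zero => simp [he0]
  | succ b ih =>
    have addition := apply_add_add_two_of_recurrence he0 he hf (b + c) b
    calc f (b + 1 + c) * e (b + 1)
        = f (c + 2 * (b + 1)) + v * (f (b + c) * e b) := by
          rw [show c + 2 * (b + 1) = b + c + b + 2 by ring, addition, Nat.add_right_comm]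
          ring
      _ = ∑ x ∈ antidiagonal (b + 1), v ^ x.1 * f (c + 2 * x.2) := by
          simp only [ih, Nat.sum_antidiagonal_succ, mul_sum, pow_zero, one_mul, pow_succ',
            mul_assoc]

theorem recurrence_of_eq_sub_mul (he0 : e 0 = 1)
    (he : ∀ n, e (n + 2) = e 1 * e (n + 1) - v * e n)
    (hf0 : f 0 = 1) (hf : ∀ n, f (n + 1) = e (n + 1) - w * e n) (n : ℕ) :
    f (n + 2) = e 1 * f (n + 1) - v * f n := by
  cases n with
  | zero => rw [hf, hf, hf0, he, he0]; ring
  | succ n => rw [hf, hf, hf, he (n + 1), he n]; ring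

theorem apply_add_mul_apply_eq_sum_antidiagonal_of_eq_sub_mul (he0 : e 0 = 1)
    (he : ∀ n, e (n + 2) = e 1 * e (n + 1) - v * e n)
    (hf0 : f 0 = 1) (hf : ∀ n, f (n + 1) = e (n + 1) - w * e n) (b c : ℕ) :
    f (b + 1 + c) * f (b + 1) = v ^ (b + 1) * f c +
      ∑ x ∈ antidiagonal b, v ^ x.1 * (f (c + 2 * x.2 + 2) - w * f (c + 2 * x.2 + 1)) := by
  have clebschGordan := apply_add_mul_eq_sum_antidiagonal_of_recurrence he0 he
    (recurrence_of_eq_sub_mul he0 he hf0 hf)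
  calc f (b + 1 + c) * f (b + 1)
      = f (b + 1 + c) * e (b + 1) - w * (f (b + (c + 1)) * e b) := by
        rw [hf b, show b + (c + 1) = b + 1 + c by ring]
        ring
    _ = _ := by
        rw [clebschGordan, clebschGordan, Nat.sum_antidiagonal_succ', add_sub_assoc, mul_sum,
          ← sum_sub_distrib]
        refine congrArg₂ _ (by simp) (sum_congr rfl fun x _ => ?_)
        rw [show c + 2 * (x.2 + 1) = c + 2 * x.2 + 2 by ring,
          show c + 1 + 2 * x.2 = c + 2 * x.2 + 1 by ring]
        ring

end LinearRecurrence

theorem sum_divisors_mul_eq_mul_of_coprime {S : Type*} [NonUnitalNonAssocSemiring S] {m n : ℕ}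
    (hmn : m.Coprime n) {f g h : ℕ → S}
    (H : ∀ d d' : ℕ, d ∣ m → d' ∣ n → h (d * d') = f d * g d') :
    ∑ d ∈ (m * n).divisors, h d = (∑ d ∈ m.divisors, f d) * ∑ d ∈ n.divisors, g d := by
  rw [Nat.divisors_mul, mul_def, sum_image hmn.mul_injOn_divisors, sum_product, sum_mul_sum]
  exact sum_congr rfl fun d hd => sum_congr rfl fun d' hd' =>
    H d d' (Nat.dvd_of_mem_divisors hd) (Nat.dvd_of_mem_divisors hd')

theorem map_pow_of_map_mul_of_pos {M : Type*} [Monoid M] {f : ℕ → M} (h1 : f 1 = 1)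
    (hmul : ∀ a b : ℕ, 0 < a → 0 < b → f (a * b) = f a * f b) {a : ℕ} (ha : 0 < a) (i : ℕ) :
    f (a ^ i) = f a ^ i := by
  induction i with
  | zero => simpa using h1
  | succ i ih => rw [pow_succ, hmul _ _ (Nat.pow_pos ha) ha, ih, pow_succ]

/-- Multiplicativity of a function on the positive integers; the value at `0` is unconstrained, and
no normalization at `1` is included. -/
def IsMultiplicativeOnPos {S : Type*} [Mul S] (f : ℕ → S) : Prop :=
  ∀ a b : ℕ, 0 < a → 0 < b → a.Coprime b → f (a * b) = f a * f b

/-- Multiplicativity of a function of two positive integers: the pairs `(a, b)` and `(a', b')` are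
coprime when `a * b` and `a' * b'` are. No normalization at `(1, 1)` is included. -/
def IsPairMultiplicativeOnPos {S : Type*} [Mul S] (G : ℕ → ℕ → S) : Prop :=
  ∀ a b a' b' : ℕ, 0 < a → 0 < b → 0 < a' → 0 < b' → (a * b).Coprime (a' * b') →
    G (a * a') (b * b') = G a b * G a' b'

theorem IsMultiplicativeOnPos.isPairMultiplicativeOnPos_mul {S : Type*} [CommSemigroup S]
    {f : ℕ → S} (hf : IsMultiplicativeOnPos f) :
    IsPairMultiplicativeOnPos fun a b => f a * f b := by
  intro a b a' b' ha hb ha' hb' hcop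
  have haa' : a.Coprime a' := hcop.coprime_mul_right.coprime_mul_right_right
  have hbb' : b.Coprime b' := hcop.coprime_mul_left.coprime_mul_left_right
  simp only [hf a a' ha ha' haa', hf b b' hb hb' hbb', mul_mul_mul_comm]

theorem IsPairMultiplicativeOnPos.eq_of_eq_prime_pow {S : Type*} [Mul S]
    {G H : ℕ → ℕ → S} (hG : IsPairMultiplicativeOnPos G) (hH : IsPairMultiplicativeOnPos H)
    (hGH : ∀ p : ℕ, p.Prime → ∀ i j : ℕ, G (p ^ i) (p ^ j) = H (p ^ i) (p ^ j))
    {a b : ℕ} (ha : 0 < a) (hb : 0 < b) : G a b = H a b := by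
  suffices ∀ n a b : ℕ, 0 < a → 0 < b → a * b = n → G a b = H a b from this _ a b ha hb rfl
  intro n
  induction n using Nat.recOnPrimePow with
  | zero => intro a b ha hb hab; exact absurd hab (Nat.mul_pos ha hb).ne'
  | one =>
    intro a b _ _ hab
    obtain ⟨rfl, rfl⟩ := mul_eq_one.mp hab
    simpa using hGH 2 Nat.prime_two 0 0
  | prime_pow_mul m p k hp hpm _ ih =>
    intro a b ha hb hab
    obtain ⟨i, a', hpa', rfl⟩ := Nat.exists_eq_pow_mul_and_not_dvd ha.ne' p hp.ne_one
    obtain ⟨j, b', hpb', rfl⟩ := Nat.exists_eq_pow_mul_and_not_dvd hb.ne' p hp.ne_one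
    have ha' : 0 < a' := Nat.pos_of_mul_pos_left ha
    have hb' : 0 < b' := Nat.pos_of_mul_pos_left hb
    have hprime_to_p : a' * b' = m := by
      rw [← Nat.ordCompl_pow_mul_of_not_dvd k hp hpm, ← hab, Nat.ordCompl_mul,
        Nat.ordCompl_pow_mul_of_not_dvd i hp hpa', Nat.ordCompl_pow_mul_of_not_dvd j hp hpb']
    have hcop : (p ^ i * p ^ j).Coprime (a' * b') := by
      rw [← pow_add, hprime_to_p]
      exact (hp.coprime_iff_not_dvd.mpr hpm).pow_left _
    have hpi := Nat.pow_pos (n := i) hp.pos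
    have hpj := Nat.pow_pos (n := j) hp.pos
    rw [hG _ _ _ _ hpi hpj ha' hb' hcop, hH _ _ _ _ hpi hpj ha' hb' hcop, hGH p hp,
      ih a' b' ha' hb' hprime_to_p]

section HeckeSum

variable {R : Type*} [CommRing R] {V W F : ℕ → R}

/-- The summand `μ(d₁) V(d) W(d₁) F(K/(d²d₁))` of the multiplication formula for `F`, where
`K = N * M`. -/
def heckeTerm (V W F : ℕ → R) (K d d₁ : ℕ) : R :=
  ((moebius d₁ : ℤ) : R) * V d * W d₁ * F (K / (d ^ 2 * d₁))

/-- The right-hand side of the multiplication formula for `F N * F M`, as a function of `N`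
and `M`. -/
def heckeSum (V W F : ℕ → R) (N M : ℕ) : R :=
  ∑ d ∈ (N.gcd M).divisors, ∑ d₁ ∈ (N.gcd M / d).divisors, heckeTerm V W F (N * M) d d₁

theorem heckeSum_comm (V W F : ℕ → R) (N M : ℕ) : heckeSum V W F N M = heckeSum V W F M N := by
  rw [heckeSum, heckeSum, Nat.gcd_comm, Nat.mul_comm]

theorem heckeTerm_mul_of_coprime (hV : IsMultiplicativeOnPos V) (hW : IsMultiplicativeOnPos W)
    (hF : IsMultiplicativeOnPos F) {K K' d d' d₁ d₁' : ℕ} (hK : 0 < K) (hK' : 0 < K')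
    (hcop : K.Coprime K') (hd : d ^ 2 * d₁ ∣ K) (hd' : d' ^ 2 * d₁' ∣ K') :
    heckeTerm V W F (K * K') (d * d') (d₁ * d₁') =
      heckeTerm V W F K d d₁ * heckeTerm V W F K' d' d₁' := by
  have coprime_of_dvd {x y : ℕ} (hx : x ∣ K) (hy : y ∣ K') : x.Coprime y :=
    (hcop.coprime_dvd_left hx).coprime_dvd_right hy
  have hdK : d ∣ K := ((dvd_pow_self d two_ne_zero).mul_right d₁).trans hd
  have hdK' : d' ∣ K' := ((dvd_pow_self d' two_ne_zero).mul_right d₁').trans hd'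
  have hd₁K : d₁ ∣ K := (Dvd.intro_left _ rfl).trans hd
  have hd₁K' : d₁' ∣ K' := (Dvd.intro_left _ rfl).trans hd'
  have hquot : K * K' / ((d * d') ^ 2 * (d₁ * d₁')) =
      K / (d ^ 2 * d₁) * (K' / (d' ^ 2 * d₁')) := by
    rw [mul_pow, mul_mul_mul_comm, Nat.mul_div_mul_comm hd hd']
  have hquotK := Nat.div_dvd_of_dvd hd
  have hquotK' := Nat.div_dvd_of_dvd hd'
  have pos {x : ℕ} (hx : x ∣ K) : 0 < x := Nat.pos_of_dvd_of_pos hx hK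
  have pos' {x : ℕ} (hx : x ∣ K') : 0 < x := Nat.pos_of_dvd_of_pos hx hK'
  rw [heckeTerm, hquot,
    isMultiplicative_moebius.map_mul_of_coprime (coprime_of_dvd hd₁K hd₁K'),
    hV _ _ (pos hdK) (pos' hdK') (coprime_of_dvd hdK hdK'),
    hW _ _ (pos hd₁K) (pos' hd₁K') (coprime_of_dvd hd₁K hd₁K'),
    hF _ _ (pos hquotK) (pos' hquotK') (coprime_of_dvd hquotK hquotK'), heckeTerm, heckeTerm]
  push_cast
  ring

theorem sq_mul_dvd_mul_of_dvd_gcd_div {N M d d₁ : ℕ} (hd : d ∣ N.gcd M)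
    (hd₁ : d₁ ∣ N.gcd M / d) : d ^ 2 * d₁ ∣ N * M := by
  have hdd₁ : d * d₁ ∣ N.gcd M := Nat.mul_dvd_of_dvd_div hd hd₁
  rw [pow_two, mul_assoc]
  exact mul_dvd_mul (hd.trans (Nat.gcd_dvd_left N M)) (hdd₁.trans (Nat.gcd_dvd_right N M))

theorem isPairMultiplicativeOnPos_heckeSum (hV : IsMultiplicativeOnPos V)
    (hW : IsMultiplicativeOnPos W) (hF : IsMultiplicativeOnPos F) :
    IsPairMultiplicativeOnPos (heckeSum V W F) := by
  intro N M N' M' hN hM hN' hM' hcop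
  have hMM' : M.Coprime M' := hcop.coprime_mul_left.coprime_mul_left_right
  have hNM' : N.Coprime M' := hcop.coprime_mul_right.coprime_mul_left_right
  have hN'M : N'.Coprime M := hcop.coprime_mul_left.coprime_mul_right_right.symm
  have hgcd : (N * N').gcd (M * M') = N.gcd M * N'.gcd M' := by
    rw [hMM'.gcd_mul, hN'M.gcd_mul_right_cancel, hNM'.gcd_mul_left_cancel]
  have hgcd_cop : (N.gcd M).Coprime (N'.gcd M') :=
    (hcop.coprime_dvd_left ((Nat.gcd_dvd_left N M).mul_right M)).coprime_dvd_right
      ((Nat.gcd_dvd_left N' M').mul_right M')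
  rw [heckeSum, hgcd, mul_mul_mul_comm N]
  refine sum_divisors_mul_eq_mul_of_coprime hgcd_cop fun d d' hd hd' => ?_
  rw [Nat.mul_div_mul_comm hd hd']
  have hcofactor_cop : (N.gcd M / d).Coprime (N'.gcd M' / d') :=
    (hgcd_cop.coprime_dvd_left (Nat.div_dvd_of_dvd hd)).coprime_dvd_right (Nat.div_dvd_of_dvd hd')
  exact sum_divisors_mul_eq_mul_of_coprime hcofactor_cop fun d₁ d₁' hd₁ hd₁' =>
    heckeTerm_mul_of_coprime hV hW hF (Nat.mul_pos hN hM) (Nat.mul_pos hN' hM') hcop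
      (sq_mul_dvd_mul_of_dvd_gcd_div hd hd₁) (sq_mul_dvd_mul_of_dvd_gcd_div hd' hd₁')

theorem heckeSum_one_right (hV1 : V 1 = 1) (hW1 : W 1 = 1) (N : ℕ) :
    heckeSum V W F N 1 = F N := by
  simp [heckeSum, heckeTerm, hV1, hW1]

theorem heckeTerm_sq_mul_one (hW1 : W 1 = 1) {d : ℕ} (hd : 0 < d) (m : ℕ) :
    heckeTerm V W F (d ^ 2 * m) d 1 = V d * F m := by
  simp [heckeTerm, hW1, Nat.mul_div_cancel_left m (Nat.pow_pos hd)]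

theorem heckeTerm_sq_mul_prime {p : ℕ} (hp : p.Prime) {d : ℕ} (hd : 0 < d) (m : ℕ) :
    heckeTerm V W F (d ^ 2 * (p * m)) d p = -(V d * W p * F m) := by
  rw [heckeTerm, moebius_apply_prime hp, ← Nat.mul_assoc,
    Nat.mul_div_cancel_left m (Nat.mul_pos (Nat.pow_pos hd) hp.pos)]
  push_cast
  ring

theorem sum_divisors_prime_pow_succ_heckeTerm {p : ℕ} (hp : p.Prime) (hW1 : W 1 = 1) {d : ℕ}
    (hd : 0 < d) (m n : ℕ) :
    ∑ d₁ ∈ (p ^ (n + 1)).divisors, heckeTerm V W F (d ^ 2 * (p * m)) d d₁ =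
      V d * (F (p * m) - W p * F m) := by
  have higher_terms : ∀ k ∈ range n,
      heckeTerm V W F (d ^ 2 * (p * m)) d (p ^ (k + 1 + 1)) = 0 :=
    fun k _ => by simp [heckeTerm, moebius_apply_prime_pow hp]
  rw [Nat.sum_divisors_prime_pow hp, sum_range_succ', sum_range_succ', sum_eq_zero higher_terms,
    zero_add, zero_add, pow_one, pow_zero, heckeTerm_sq_mul_prime hp hd,
    heckeTerm_sq_mul_one hW1 hd]
  ring

theorem heckeSum_prime_pow_succ {p : ℕ} (hp : p.Prime) (hVpow : ∀ i, V (p ^ i) = V p ^ i)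
    (hW1 : W 1 = 1) (b c : ℕ) :
    heckeSum V W F (p ^ (b + 1 + c)) (p ^ (b + 1)) = V p ^ (b + 1) * F (p ^ c) +
      ∑ x ∈ antidiagonal b,
        V p ^ x.1 * (F (p ^ (c + 2 * x.2 + 2)) - W p * F (p ^ (c + 2 * x.2 + 1))) := by
  have hgcd : (p ^ (b + 1 + c)).gcd (p ^ (b + 1)) = p ^ (b + 1) :=
    Nat.gcd_eq_right (pow_dvd_pow p (Nat.le_add_right _ _))
  have top_term : heckeTerm V W F (p ^ (b + 1 + c) * p ^ (b + 1)) (p ^ (b + 1)) 1 =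
      V p ^ (b + 1) * F (p ^ c) := by
    rw [show p ^ (b + 1 + c) * p ^ (b + 1) = (p ^ (b + 1)) ^ 2 * p ^ c by ring,
      heckeTerm_sq_mul_one hW1 (Nat.pow_pos hp.pos), hVpow]
  have inner_sum : ∀ x ∈ antidiagonal b, ∑ d₁ ∈ (p ^ (x.2 + 1)).divisors,
      heckeTerm V W F (p ^ (b + 1 + c) * p ^ (b + 1)) (p ^ x.1) d₁ =
        V p ^ x.1 * (F (p ^ (c + 2 * x.2 + 2)) - W p * F (p ^ (c + 2 * x.2 + 1))) := by
    rintro ⟨i, j⟩ hij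
    obtain rfl := mem_antidiagonal.mp hij
    rw [show p ^ (i + j + 1 + c) * p ^ (i + j + 1) =
        (p ^ i) ^ 2 * (p * p ^ (c + 2 * j + 1)) by ring,
      sum_divisors_prime_pow_succ_heckeTerm hp hW1 (Nat.pow_pos hp.pos), hVpow, ← pow_succ']
  have as_antidiagonal : heckeSum V W F (p ^ (b + 1 + c)) (p ^ (b + 1)) =
      ∑ x ∈ antidiagonal (b + 1), ∑ d₁ ∈ (p ^ x.2).divisors,
        heckeTerm V W F (p ^ (b + 1 + c) * p ^ (b + 1)) (p ^ x.1) d₁ := by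
    rw [heckeSum, hgcd, Nat.sum_divisors_prime_pow hp, Nat.sum_antidiagonal_eq_sum_range_succ_mk]
    exact sum_congr rfl fun i hi => by
      rw [Nat.pow_div (Nat.le_of_lt_succ (mem_range.mp hi)) hp.pos]
  rw [as_antidiagonal, Nat.sum_antidiagonal_succ', pow_zero, Nat.divisors_one, sum_singleton,
    top_term, sum_congr rfl inner_sum]

end HeckeSum

theorem mul_eq_heckeSum_prime_pow {R : Type*} [CommRing R] {V W E F : ℕ → R} {p : ℕ}
    (hp : p.Prime) (hVpow : ∀ i, V (p ^ i) = V p ^ i) (hW1 : W 1 = 1) (hE1 : E 1 = 1)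
    (hErec : ∀ δ : ℕ, 1 ≤ δ → E (p ^ (δ + 1)) = E p * E (p ^ δ) - V p * E (p ^ (δ - 1)))
    (hF1 : F 1 = 1)
    (hFp : ∀ δ : ℕ, 1 ≤ δ → F (p ^ δ) = E (p ^ δ) - W p * E (p ^ (δ - 1))) (i j : ℕ) :
    F (p ^ i) * F (p ^ j) = heckeSum V W F (p ^ i) (p ^ j) := by
  wlog hij : j ≤ i generalizing i j
  · rw [mul_comm, heckeSum_comm]
    exact this j i (le_of_not_ge hij)
  obtain ⟨c, rfl⟩ := Nat.exists_eq_add_of_le hij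
  cases j with
  | zero =>
    have hV1 : V 1 = 1 := by simpa using hVpow 0
    rw [pow_zero, hF1, mul_one, heckeSum_one_right hV1 hW1]
  | succ b =>
    rw [heckeSum_prime_pow_succ hp hVpow hW1]
    exact apply_add_mul_apply_eq_sum_antidiagonal_of_eq_sub_mul
      (e := fun n => E (p ^ n)) (f := fun n => F (p ^ n)) (by simpa using hE1)
      (fun n => by simpa using hErec (n + 1) n.succ_pos) (by simpa using hF1)
      (fun n => by simpa using hFp (n + 1) n.succ_pos) b c

theorem statement3_general {R : Type*} [CommRing R] (V W E F : ℕ → R)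
    (hV1 : V 1 = 1)
    (hVmul : ∀ a b : ℕ, 0 < a → 0 < b → V (a * b) = V a * V b)
    (hW1 : W 1 = 1)
    (hWmul : ∀ a b : ℕ, 0 < a → 0 < b → Nat.Coprime a b → W (a * b) = W a * W b)
    (hE1 : E 1 = 1)
    (hErec : ∀ p : ℕ, p.Prime → ∀ δ : ℕ, 1 ≤ δ →
      E (p ^ (δ + 1)) = E p * E (p ^ δ) - V p * E (p ^ (δ - 1)))
    (hF1 : F 1 = 1)
    (hFmul : ∀ a b : ℕ, 0 < a → 0 < b → Nat.Coprime a b → F (a * b) = F a * F b)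
    (hFp : ∀ p : ℕ, p.Prime → ∀ δ : ℕ, 1 ≤ δ →
      F (p ^ δ) = E (p ^ δ) - W p * E (p ^ (δ - 1))) :
    ∀ N M : ℕ, 0 < N → 0 < M →
      F N * F M = ∑ d ∈ (Nat.gcd N M).divisors, ∑ d₁ ∈ (Nat.gcd N M / d).divisors,
        ((ArithmeticFunction.moebius d₁ : ℤ) : R) * V d * W d₁
          * F (N * M / (d ^ 2 * d₁)) := by
  intro N M hN hM
  have hV : IsMultiplicativeOnPos V := fun a b ha hb _ => hVmul a b ha hb
  have hleft := IsMultiplicativeOnPos.isPairMultiplicativeOnPos_mul hFmul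
  have hright := isPairMultiplicativeOnPos_heckeSum hV hWmul hFmul
  have hprime_pow : ∀ p : ℕ, p.Prime → ∀ i j : ℕ,
      F (p ^ i) * F (p ^ j) = heckeSum V W F (p ^ i) (p ^ j) := fun p hp =>
    mul_eq_heckeSum_prime_pow hp (map_pow_of_map_mul_of_pos hV1 hVmul hp.pos) hW1 hE1 (hErec p hp)
      hF1 (hFp p hp)
  exact hleft.eq_of_eq_prime_pow hright hprime_pow hN hM

/-- With `V`, `W` completely multiplicative, `E` multiplicative satisfying a
Hecke-type recurrence, and `F` the multiplicative function with
`F (p^δ) = E (p^δ) - W p * E (p^(δ-1))`, one has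
`F N * F M = ∑_{d | (N,M)} ∑_{d₁ | (N,M)/d} μ(d₁) V(d) W(d₁) F(N*M/(d²d₁))`. -/
theorem statement3 {R : Type*} [CommRing R] (V W E F : ℕ → R)
    (hV1 : V 1 = 1)
    (hVmul : ∀ a b : ℕ, 0 < a → 0 < b → V (a * b) = V a * V b)
    (hW1 : W 1 = 1)
    (hWmul : ∀ a b : ℕ, 0 < a → 0 < b → W (a * b) = W a * W b)
    (hE1 : E 1 = 1)
    (hEmul : ∀ a b : ℕ, 0 < a → 0 < b → Nat.Coprime a b → E (a * b) = E a * E b)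
    (hErec : ∀ p : ℕ, p.Prime → ∀ δ : ℕ, 1 ≤ δ →
      E (p ^ (δ + 1)) = E p * E (p ^ δ) - V p * E (p ^ (δ - 1)))
    (hF1 : F 1 = 1)
    (hFmul : ∀ a b : ℕ, 0 < a → 0 < b → Nat.Coprime a b → F (a * b) = F a * F b)
    (hFp : ∀ p : ℕ, p.Prime → ∀ δ : ℕ, 1 ≤ δ →
      F (p ^ δ) = E (p ^ δ) - W p * E (p ^ (δ - 1))) :
    ∀ N M : ℕ, 0 < N → 0 < M →
      F N * F M = ∑ d ∈ (Nat.gcd N M).divisors, ∑ d₁ ∈ (Nat.gcd N M / d).divisors,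
        ((ArithmeticFunction.moebius d₁ : ℤ) : R) * V d * W d₁
          * F (N * M / (d ^ 2 * d₁)) := by
  exact statement3_general V W E F hV1 hVmul hW1 (fun a b ha hb _ => hWmul a b ha hb)
    hE1 hErec hF1 hFmul hFp
end

section
/- Let k ≥ 2 be an integer and let χ : ℤ_{>0} → ℂ be completely multiplicative (χ(1) = 1 and χ(ab) = χ(a)χ(b) for all a, b). For f ≥ 1 define h(f) := Σ_{d|f} μ(d)·χ(d)·d^{k−2}·σ_{2k−3}(f/d) and g(f) := Σ_{e|f} μ(e)·h(f/e), where μ is the Möbius function and σ_{2k−3}(t) = Σ_{d|t} d^{2k−3}. Then for every prime p and every f ≥ 1: g(pf) = p^{2k−3}·g(f) if p | f, and g(pf) = (p^{2k−3} − χ(p)·p^{k−2})·g(f) if p ∤ f. -/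
/-!
Put `r = 2k - 3` and `s = k - 2`. Since `σ_r = ζ * id^r` and `μ * ζ = 1`, the sums collapse to
the Dirichlet convolution `g = (μ·χ·id^s) * id^r`. If `m ∣ f`, then the squarefree divisors of
`m f` are those of `f`; only these contribute, and each term picks up a factor `m^r`. If `p ∤ f`,
then `g (p f) = g p * g f` since `g` is multiplicative, and `g p = p^r - χ(p) p^s`.
-/

open ArithmeticFunction
open scoped ArithmeticFunction.Moebius ArithmeticFunction.zeta ArithmeticFunction.sigma

theorem dvd_of_squarefree_of_dvd_mul {d m n : ℕ} (hd : Squarefree d) (hmn : m ∣ n)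
    (hdmn : d ∣ m * n) : d ∣ n :=
  (hd.dvd_pow_iff_dvd two_ne_zero).mp <| sq n ▸ hdmn.trans (mul_dvd_mul_right hmn n)

theorem pow_apply_of_ne_zero (r : ℕ) {n : ℕ} (hn : n ≠ 0) :
    ArithmeticFunction.pow r n = n ^ r := by
  simp [pow_apply, hn]

theorem pow_apply_mul (r m n : ℕ) : ArithmeticFunction.pow r (m * n) =
    ArithmeticFunction.pow r m * ArithmeticFunction.pow r n := by
  rcases eq_or_ne m 0 with rfl | hm
  · simp
  rcases eq_or_ne n 0 with rfl | hn
  · simp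
  rw [pow_apply_of_ne_zero r (mul_ne_zero hm hn), pow_apply_of_ne_zero r hm,
    pow_apply_of_ne_zero r hn, mul_pow]

theorem arithmeticFunction_mul_apply_eq_sum_divisors {R : Type*} [Semiring R]
    (a b : ArithmeticFunction R) (n : ℕ) :
    (a * b) n = ∑ d ∈ n.divisors, a d * b (n / d) := by
  rw [mul_apply, Nat.sum_divisorsAntidiagonal fun d e ↦ a d * b e]

section CommSemiring

variable {R : Type*} [CommSemiring R] {a w : ArithmeticFunction R}

theorem arithmeticFunction_mul_apply_mul_of_dvd {m n : ℕ} (ha : ∀ d, ¬ Squarefree d → a d = 0)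
    (hw : ∀ e, w (m * e) = w m * w e) (hmn : m ∣ n) :
    (a * w) (m * n) = w m * (a * w) n := by
  rcases eq_or_ne n 0 with rfl | hn
  · simp
  have hmn0 : m * n ≠ 0 := mul_ne_zero (ne_zero_of_dvd_ne_zero hn hmn) hn
  have non_divisor_term (d) (hd : d ∈ (m * n).divisors) (hdn : d ∉ n.divisors) :
      a d * w (m * n / d) = 0 := by
    have : ¬ Squarefree d := fun hsq ↦ hdn <| Nat.mem_divisors.mpr
      ⟨dvd_of_squarefree_of_dvd_mul hsq hmn (Nat.dvd_of_mem_divisors hd), hn⟩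
    rw [ha d this, zero_mul]
  calc (a * w) (m * n)
      = ∑ d ∈ (m * n).divisors, a d * w (m * n / d) :=
        arithmeticFunction_mul_apply_eq_sum_divisors a w _
    _ = ∑ d ∈ n.divisors, a d * w (m * n / d) :=
        (Finset.sum_subset (Nat.divisors_subset_of_dvd hmn0 (Nat.dvd_mul_left n m))
          non_divisor_term).symm
    _ = ∑ d ∈ n.divisors, w m * (a d * w (n / d)) := Finset.sum_congr rfl fun d hd ↦ by
        rw [Nat.mul_div_assoc m (Nat.dvd_of_mem_divisors hd), hw, mul_left_comm]
    _ = w m * (a * w) n := by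
        rw [← Finset.mul_sum, arithmeticFunction_mul_apply_eq_sum_divisors]

theorem arithmeticFunction_mul_apply_prime_mul_of_not_dvd (ha : a.IsMultiplicative)
    (hw : w.IsMultiplicative) {p n : ℕ} (hp : p.Prime) (hpn : ¬ p ∣ n) :
    (a * w) (p * n) = (w p + a p) * (a * w) n := by
  have apply_prime : (a * w) p = w p + a p := by
    rw [arithmeticFunction_mul_apply_eq_sum_divisors, hp.sum_divisors, Nat.div_self hp.pos,
      Nat.div_one, ha.map_one, hw.map_one, mul_one, one_mul, add_comm]
  rw [(ha.mul hw).map_mul_of_coprime (hp.coprime_iff_not_dvd.mpr hpn), apply_prime]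

end CommSemiring

section CommRing

variable {R : Type*} [CommRing R]

/-- The arithmetic function `d ↦ μ(d) χ(d) d^s`, whose convolution with `σ_r` is `h` and with
`id^r` is `g`. The value of `χ` at `0` is irrelevant because `μ 0 = 0`. -/
def moebiusTwist (χ : ℕ → R) (s : ℕ) : ArithmeticFunction R where
  toFun d := (μ d : R) * χ d * (d : R) ^ s
  map_zero' := by simp

theorem moebiusTwist_apply (χ : ℕ → R) (s d : ℕ) :
    moebiusTwist χ s d = (μ d : R) * χ d * (d : R) ^ s :=
  rfl

theorem moebiusTwist_of_not_squarefree (χ : ℕ → R) (s : ℕ) {d : ℕ} (hd : ¬ Squarefree d) :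
    moebiusTwist χ s d = 0 := by
  simp [moebiusTwist_apply, hd]

theorem moebiusTwist_prime (χ : ℕ → R) (s : ℕ) {p : ℕ} (hp : p.Prime) :
    moebiusTwist χ s p = -(χ p * (p : R) ^ s) := by
  simp [moebiusTwist_apply, moebius_apply_prime hp]

theorem isMultiplicative_moebiusTwist {χ : ℕ → R} (hχ1 : χ 1 = 1)
    (hχmul : ∀ a b : ℕ, 0 < a → 0 < b → a.Coprime b → χ (a * b) = χ a * χ b) (s : ℕ) :
    (moebiusTwist χ s).IsMultiplicative := by
  refine IsMultiplicative.iff_ne_zero.mpr ⟨by simp [moebiusTwist_apply, hχ1], ?_⟩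
  intro a b ha hb hab
  simp only [moebiusTwist_apply, isMultiplicative_moebius.map_mul_of_coprime hab,
    hχmul a b (Nat.pos_of_ne_zero ha) (Nat.pos_of_ne_zero hb) hab]
  push_cast
  ring

theorem moebius_mul_mul_sigma (a : ArithmeticFunction R) (r : ℕ) :
    (μ : ArithmeticFunction R) * (a * (σ r : ArithmeticFunction R)) =
      a * (ArithmeticFunction.pow r : ArithmeticFunction R) := by
  rw [← zeta_mul_pow_eq_sigma, natCoe_mul, mul_left_comm, ← mul_assoc (μ : ArithmeticFunction R),
    coe_moebius_mul_coe_zeta, one_mul]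

theorem eq_moebiusTwist_mul_pow {χ h g : ℕ → R} {r s : ℕ}
    (hh : ∀ f : ℕ, 1 ≤ f → h f = ∑ d ∈ f.divisors,
      (μ d : R) * χ d * (d : R) ^ s * ∑ e ∈ (f / d).divisors, (e : R) ^ r)
    (hg : ∀ f : ℕ, 1 ≤ f → g f = ∑ e ∈ f.divisors, (μ e : R) * h (f / e))
    {f : ℕ} (hf : 1 ≤ f) :
    g f = (moebiusTwist χ s * (ArithmeticFunction.pow r : ArithmeticFunction R)) f := by
  have h_eq {n : ℕ} (hn : 1 ≤ n) :
      h n = (moebiusTwist χ s * (σ r : ArithmeticFunction R)) n := by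
    rw [hh n hn, arithmeticFunction_mul_apply_eq_sum_divisors]
    simp [moebiusTwist_apply, sigma_apply]
  calc g f = ∑ e ∈ f.divisors, (μ e : R) * h (f / e) := hg f hf
    _ = ∑ e ∈ f.divisors,
          (μ e : R) * (moebiusTwist χ s * (σ r : ArithmeticFunction R)) (f / e) :=
        Finset.sum_congr rfl fun e he ↦ by
          rw [h_eq (Nat.div_pos (Nat.divisor_le he) (Nat.pos_of_mem_divisors he))]
    _ = ((μ : ArithmeticFunction R) * (moebiusTwist χ s * (σ r : ArithmeticFunction R))) f := by
        simp only [arithmeticFunction_mul_apply_eq_sum_divisors, intCoe_apply]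
    _ = (moebiusTwist χ s * (ArithmeticFunction.pow r : ArithmeticFunction R)) f := by
        rw [moebius_mul_mul_sigma]

theorem statement7_general {χ : ℕ → R} (hχ1 : χ 1 = 1)
    (hχmul : ∀ a b : ℕ, 0 < a → 0 < b → a.Coprime b → χ (a * b) = χ a * χ b)
    {h g : ℕ → R} {r s : ℕ}
    (hh : ∀ f : ℕ, 1 ≤ f → h f = ∑ d ∈ f.divisors,
      (μ d : R) * χ d * (d : R) ^ s * ∑ e ∈ (f / d).divisors, (e : R) ^ r)
    (hg : ∀ f : ℕ, 1 ≤ f → g f = ∑ e ∈ f.divisors, (μ e : R) * h (f / e)) :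
    (∀ m f : ℕ, 1 ≤ f → m ∣ f → g (m * f) = (m : R) ^ r * g f) ∧
    ∀ p : ℕ, p.Prime → ∀ f : ℕ, 1 ≤ f → ¬ p ∣ f →
      g (p * f) = ((p : R) ^ r - χ p * (p : R) ^ s) * g f := by
  have g_eq {f : ℕ} (hf : 1 ≤ f) := eq_moebiusTwist_mul_pow hh hg hf
  have pow_eq {n : ℕ} (hn : n ≠ 0) :
      (ArithmeticFunction.pow r : ArithmeticFunction R) n = (n : R) ^ r := by
    rw [natCoe_apply, pow_apply_of_ne_zero r hn, Nat.cast_pow]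
  refine ⟨fun m f hf hmf ↦ ?_, fun p hp f hf hpf ↦ ?_⟩
  · have hm : 0 < m := Nat.pos_of_dvd_of_pos hmf hf
    rw [g_eq hf, g_eq (Nat.mul_pos hm hf), ← pow_eq hm.ne']
    exact arithmeticFunction_mul_apply_mul_of_dvd
      (fun _ ↦ moebiusTwist_of_not_squarefree χ s)
      (fun e ↦ by simp only [natCoe_apply, pow_apply_mul, Nat.cast_mul]) hmf
  · rw [g_eq hf, g_eq (Nat.mul_pos hp.pos hf), arithmeticFunction_mul_apply_prime_mul_of_not_dvd
      (isMultiplicative_moebiusTwist hχ1 hχmul s) isMultiplicative_pow.natCast hp hpf,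
      pow_eq hp.ne_zero, moebiusTwist_prime χ s hp, ← sub_eq_add_neg]

end CommRing

/-- with `h f = ∑_{d|f} μ(d) χ(d) d^(k-2) σ_{2k-3}(f/d)` and
`g f = ∑_{e|f} μ(e) h(f/e)`, one has `g (p*f) = p^(2k-3) g f` if `p ∣ f` and
`g (p*f) = (p^(2k-3) - χ(p) p^(k-2)) g f` if `p ∤ f`. -/
theorem statement7 (k : ℕ) (hk : 2 ≤ k) (χ : ℕ → ℂ)
    (hχ1 : χ 1 = 1)
    (hχmul : ∀ a b : ℕ, 0 < a → 0 < b → χ (a * b) = χ a * χ b)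
    (h g : ℕ → ℂ)
    (hh : ∀ f : ℕ, 1 ≤ f → h f = ∑ d ∈ f.divisors,
      ((ArithmeticFunction.moebius d : ℤ) : ℂ) * χ d * (d : ℂ) ^ (k - 2)
        * ∑ e ∈ (f / d).divisors, (e : ℂ) ^ (2 * k - 3))
    (hg : ∀ f : ℕ, 1 ≤ f → g f = ∑ e ∈ f.divisors,
      ((ArithmeticFunction.moebius e : ℤ) : ℂ) * h (f / e)) :
    ∀ p : ℕ, p.Prime → ∀ f : ℕ, 1 ≤ f →
      (p ∣ f → g (p * f) = (p : ℂ) ^ (2 * k - 3) * g f) ∧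
      (¬ p ∣ f → g (p * f) = ((p : ℂ) ^ (2 * k - 3) - χ p * (p : ℂ) ^ (k - 2)) * g f) := by
  obtain ⟨of_dvd, of_not_dvd⟩ :=
    statement7_general hχ1 (fun a b ha hb _ ↦ hχmul a b ha hb) hh hg
  exact fun p hp f hf ↦ ⟨of_dvd p f hf, of_not_dvd p hp f hf⟩
end

section
/- Let k ≥ 2 be an integer and let χ : ℤ_{>0} → ℂ be completely multiplicative (χ(1) = 1 and χ(ab) = χ(a)χ(b) for all a, b). For f ≥ 1 define h(f) := Σ_{d|f} μ(d)·χ(d)·d^{k−2}·σ_{2k−3}(f/d) and g(f) := Σ_{e|f} μ(e)·h(f/e), where μ is the Möbius function and σ_{2k−3}(t) = Σ_{d|t} d^{2k−3}. Then for every prime p, every integer j ≥ 1 and every f ≥ 1 with p ∤ f: g(p^j f) = ( p^{(2k−3)j} − χ(p)·p^{k−2+(2k−3)(j−1)} )·g(f). -/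
/-!
In the ring of arithmetic functions under Dirichlet convolution, put `ψ(d) = χ(d) d^a` and let
`I_b(e) = e^b`. Then `h = (μψ) * σ_b = (μψ) * ζ * I_b` and `g = μ * h`, so Möbius inversion cancels
`ζ` and leaves `g = (μψ) * I_b`. This is multiplicative, and since `μ` vanishes at `p²`, `p³`, …,
only two terms survive at a prime power: `g(p^j) = I_b(p^j) - ψ(p) I_b(p^(j-1))`.
-/

open ArithmeticFunction
open scoped ArithmeticFunction.Moebius ArithmeticFunction.zeta ArithmeticFunction.sigma

section DirichletConvolution

theorem dirichletMul_apply_eq_sum_divisors {R : Type*} [Semiring R] (u v : ArithmeticFunction R)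
    (n : ℕ) : (u * v) n = ∑ d ∈ n.divisors, u d * v (n / d) := by
  rw [mul_apply, Nat.sum_divisorsAntidiagonal fun d e => u d * v e]

variable {R : Type*} [CommRing R]

theorem moebius_mul_mul_zeta_mul (u v : ArithmeticFunction R) :
    (μ : ArithmeticFunction R) * (u * (ζ * v)) = u * v := by
  rw [mul_left_comm, ← mul_assoc (μ : ArithmeticFunction R), coe_moebius_mul_coe_zeta, one_mul]

theorem moebius_pmul_mul_apply_prime_pow_succ (ψ v : ArithmeticFunction R) {p : ℕ} (hp : p.Prime)
    (i : ℕ) :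
    ((μ : ArithmeticFunction R).pmul ψ * v) (p ^ (i + 1)) =
      ψ 1 * v (p ^ (i + 1)) - ψ p * v (p ^ i) := by
  have higher_terms_vanish : ∀ l ∈ Finset.range i,
      (μ : ArithmeticFunction R).pmul ψ (p ^ (l + 1 + 1)) * v (p ^ (i + 1) / p ^ (l + 1 + 1)) = 0 :=
    fun l _ => by simp [moebius_apply_prime_pow hp]
  have div_prime : p ^ (i + 1) / p = p ^ i := by
    rw [pow_succ, Nat.mul_div_cancel _ hp.pos]
  rw [dirichletMul_apply_eq_sum_divisors, Nat.sum_divisors_prime_pow hp, Finset.sum_range_succ',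
    Finset.sum_range_succ', Finset.sum_eq_zero higher_terms_vanish]
  simp [moebius_apply_prime hp, div_prime, sub_eq_neg_add]

theorem moebius_pmul_mul_apply_prime_pow_succ_mul {ψ v : ArithmeticFunction R}
    (hψ : ψ.IsMultiplicative) (hv : v.IsMultiplicative) {p n : ℕ} (hp : p.Prime) (hpn : ¬ p ∣ n)
    (i : ℕ) :
    ((μ : ArithmeticFunction R).pmul ψ * v) (p ^ (i + 1) * n) =
      (v (p ^ (i + 1)) - ψ p * v (p ^ i)) * ((μ : ArithmeticFunction R).pmul ψ * v) n := by
  have coprime : (p ^ (i + 1)).Coprime n := ((hp.coprime_iff_not_dvd).2 hpn).pow_left (i + 1)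
  have multiplicative : ((μ : ArithmeticFunction R).pmul ψ * v).IsMultiplicative :=
    (isMultiplicative_moebius.intCast.pmul hψ).mul hv
  rw [multiplicative.map_mul_of_coprime coprime, moebius_pmul_mul_apply_prime_pow_succ ψ v hp,
    hψ.map_one, one_mul]

end DirichletConvolution

section PowerTwist

/-- The twist `n ↦ χ(n) n^a` of `χ` by a power, as an arithmetic function; its value at `0` is set
to `0` whatever `χ 0` is. -/
def powTwist {R : Type*} [Semiring R] (χ : ℕ → R) (a : ℕ) : ArithmeticFunction R :=
  toArithmeticFunction fun n => χ n * (n : R) ^ a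

theorem powTwist_apply {R : Type*} [Semiring R] (χ : ℕ → R) (a : ℕ) {n : ℕ} (hn : n ≠ 0) :
    powTwist χ a n = χ n * (n : R) ^ a :=
  if_neg hn

theorem isMultiplicative_powTwist {R : Type*} [CommSemiring R] {χ : ℕ → R} (hχ1 : χ 1 = 1)
    (hχmul : ∀ m n : ℕ, 0 < m → 0 < n → m.Coprime n → χ (m * n) = χ m * χ n) (a : ℕ) :
    (powTwist χ a).IsMultiplicative := by
  refine IsMultiplicative.iff_ne_zero.2 ⟨by simp [powTwist_apply, hχ1], fun {m n} hm hn hmn => ?_⟩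
  rw [powTwist_apply χ a (mul_ne_zero hm hn), powTwist_apply χ a hm, powTwist_apply χ a hn,
    hχmul m n hm.bot_lt hn.bot_lt hmn, Nat.cast_mul]
  ring

theorem sum_moebius_mul_twist_mul_sum_pow {R : Type*} [CommRing R] (χ : ℕ → R) (a b n : ℕ) :
    ∑ d ∈ n.divisors, ((μ d : ℤ) : R) * χ d * (d : R) ^ a * ∑ e ∈ (n / d).divisors, (e : R) ^ b =
      ((μ : ArithmeticFunction R).pmul (powTwist χ a) * (σ b : ArithmeticFunction R)) n := by
  rw [dirichletMul_apply_eq_sum_divisors]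
  refine Finset.sum_congr rfl fun d hd => ?_
  rw [pmul_apply, powTwist_apply χ a (Nat.pos_of_mem_divisors hd).ne', intCoe_apply, natCoe_apply,
    sigma_apply, Nat.cast_sum, mul_assoc (μ d : R)]
  simp only [Nat.cast_pow]

theorem sum_moebius_mul_eq_moebius_pmul_powTwist_mul_pow {R : Type*} [CommRing R] {χ : ℕ → R}
    {a b : ℕ} {h : ℕ → R}
    (hh : ∀ f : ℕ, 1 ≤ f → h f = ∑ d ∈ f.divisors,
      ((μ d : ℤ) : R) * χ d * (d : R) ^ a * ∑ e ∈ (f / d).divisors, (e : R) ^ b) (n : ℕ) :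
    ∑ e ∈ n.divisors, ((μ e : ℤ) : R) * h (n / e) =
      ((μ : ArithmeticFunction R).pmul (powTwist χ a) *
        (ArithmeticFunction.pow b : ArithmeticFunction R)) n := by
  rw [← moebius_mul_mul_zeta_mul, ← natCoe_mul, zeta_mul_pow_eq_sigma,
    dirichletMul_apply_eq_sum_divisors]
  refine Finset.sum_congr rfl fun d hd => ?_
  rw [hh _ (Nat.div_pos (Nat.divisor_le hd) (Nat.pos_of_mem_divisors hd)),
    sum_moebius_mul_twist_mul_sum_pow, intCoe_apply]

end PowerTwist

theorem statement8_general {R : Type*} [CommRing R] (a b : ℕ) {χ : ℕ → R} (hχ1 : χ 1 = 1)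
    (hχmul : ∀ m n : ℕ, 0 < m → 0 < n → m.Coprime n → χ (m * n) = χ m * χ n) {h g : ℕ → R}
    (hh : ∀ f : ℕ, 1 ≤ f → h f = ∑ d ∈ f.divisors,
      ((μ d : ℤ) : R) * χ d * (d : R) ^ a * ∑ e ∈ (f / d).divisors, (e : R) ^ b)
    (hg : ∀ f : ℕ, 1 ≤ f → g f = ∑ e ∈ f.divisors, ((μ e : ℤ) : R) * h (f / e))
    {p : ℕ} (hp : p.Prime) {j : ℕ} (hj : 1 ≤ j) {f : ℕ} (hf : 1 ≤ f) (hpf : ¬ p ∣ f) :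
    g (p ^ j * f) =
      ((p : R) ^ (b * j) - χ p * (p : R) ^ (a + b * (j - 1))) * g f := by
  have g_eq : ∀ n : ℕ, 1 ≤ n → g n = ((μ : ArithmeticFunction R).pmul (powTwist χ a) *
      (ArithmeticFunction.pow b : ArithmeticFunction R)) n := fun n hn =>
    (hg n hn).trans (sum_moebius_mul_eq_moebius_pmul_powTwist_mul_pow hh n)
  have pow_prime_pow : ∀ i : ℕ,
      (ArithmeticFunction.pow b : ArithmeticFunction R) (p ^ i) = (p : R) ^ (b * i) := fun i => by
    simp [pow_apply, hp.ne_zero, ← pow_mul, mul_comm i]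
  obtain ⟨i, rfl⟩ := Nat.exists_eq_add_of_le' hj
  rw [g_eq _ (Nat.mul_pos (pow_pos hp.pos _) hf), g_eq f hf,
    moebius_pmul_mul_apply_prime_pow_succ_mul (isMultiplicative_powTwist hχ1 hχmul a)
      isMultiplicative_pow.natCast hp hpf,
    pow_prime_pow, pow_prime_pow, powTwist_apply χ a hp.ne_zero, Nat.add_sub_cancel, mul_assoc,
    pow_add]

/-- iterated form of Statement 7: for a prime `p`, `j ≥ 1` and `f` with
`p ∤ f`, `g (p^j * f) = (p^((2k-3)j) - χ(p) p^(k-2+(2k-3)(j-1))) * g f`. -/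
theorem statement8 (k : ℕ) (hk : 2 ≤ k) (χ : ℕ → ℂ)
    (hχ1 : χ 1 = 1)
    (hχmul : ∀ a b : ℕ, 0 < a → 0 < b → χ (a * b) = χ a * χ b)
    (h g : ℕ → ℂ)
    (hh : ∀ f : ℕ, 1 ≤ f → h f = ∑ d ∈ f.divisors,
      ((ArithmeticFunction.moebius d : ℤ) : ℂ) * χ d * (d : ℂ) ^ (k - 2)
        * ∑ e ∈ (f / d).divisors, (e : ℂ) ^ (2 * k - 3))
    (hg : ∀ f : ℕ, 1 ≤ f → g f = ∑ e ∈ f.divisors,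
      ((ArithmeticFunction.moebius e : ℤ) : ℂ) * h (f / e)) :
    ∀ p : ℕ, p.Prime → ∀ j : ℕ, 1 ≤ j → ∀ f : ℕ, 1 ≤ f → ¬ p ∣ f →
      g (p ^ j * f) =
        ((p : ℂ) ^ ((2 * k - 3) * j)
          - χ p * (p : ℂ) ^ (k - 2 + (2 * k - 3) * (j - 1))) * g f :=
  fun _ hp _ hj _ hf hpf =>
    statement8_general _ _ hχ1 (fun a b ha hb _ => hχmul a b ha hb) hh hg hp hj hf hpf
end
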